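/- arXiv:1401.6139 — 2 statements merged into one kernel-verified Lean document; each statement's English description precedes it below -/
import Mathlib

section
/- Let k be a commutative ring and n a natural number. Then the homology of the chain complex (K(n)_*, D) vanishes in every positive degree: H_i(K(n)) = 0 for all i > 0. -/
/-!
Reading a block `a b₁ … b_p` as the left-normed bracket `[…[[a, b₁], b₂], …, b_p]`, the map `D` is
the restriction of the Leibniz differential of a free Lie algebra. That differential satisfies
`d (ω | y) = (d ω | y) + (-1)^|ω| ω · y`, where the bracket `y` acts on tuples by derivations.
It commutes with the action of letters, hence with that of brackets, and so `d ∘ d = 0`.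

For exactness, `0` is the first entry of every split tuple, and `1` either occurs in the first block
or is the head of the second one. Let `h` be the map `(0u1v | …) ↦ -(0u | 1v | …)`, extended by
zero. Gluing the first two blocks of `(0u | 1v | …)` back together gives one of the terms of its
differential, and in the first block of any other term the part from `1` on is shorter than `1v`.
So `1 - h D - D h` strictly decreases the lexicographic weight `(|1v|, |B₁|)` of `(0u1v | B₁ | …)`:
it is locally nilpotent, and every cycle is homologous to its image under it.
-/

/-- `IsSTuple n m B`: the family of blocks `B₀, …, Bₘ` is an `m`-split `(n+1)`-tuple:
all blocks are nonempty, their concatenation contains each element of `{0,…,n}` exactly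
once, the heads of the blocks are strictly increasing, and the head of each block is
strictly smaller than every other entry of that block. -/
def IsSTuple (n m : ℕ) (B : Fin (m + 1) → List ℕ) : Prop :=
  (∀ i, B i ≠ []) ∧
  ((List.ofFn B).flatten.Perm (List.range (n + 1))) ∧
  (∀ i j : Fin (m + 1), i < j → (B i).headI < (B j).headI) ∧
  (∀ i : Fin (m + 1), ∀ x ∈ (B i).tail, (B i).headI < x)

/-- The set `STuple(n,m)` of `m`-split `(n+1)`-tuples. -/
structure STuple (n m : ℕ) where
  B : Fin (m + 1) → List ℕ
  prop : IsSTuple n m B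

/-- The projection `p` sending `(B₀ | … | Bₘ)` to the concatenation `B₀B₁⋯Bₘ`. -/
def pval {m : ℕ} (B : Fin (m + 1) → List ℕ) : List ℕ := (List.ofFn B).flatten

/-- `starOp x y S` is the list `x *_S y`: the entries of `x`, followed by the entries
`y_ℓ` for `ℓ ∈ S` in decreasing order of `ℓ`, then `y₀`, then the entries `y_ℓ` for
`ℓ ∈ {1,…,|y|-1} ∖ S` in increasing order of `ℓ`. -/
def starOp (x y : List ℕ) (S : Finset ℕ) : List ℕ :=
  x ++ ((S.sort (· ≤ ·)).reverse.map (fun ℓ => y.getD ℓ 0)) ++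
    y.headI :: ((((Finset.Icc 1 (y.length - 1)) \ S).sort (· ≤ ·)).map (fun ℓ => y.getD ℓ 0))

/-- The family of blocks obtained from `(B₀ | … | B_{m+1})` by replacing `Bᵢ` with
`Bᵢ *_S Bⱼ` and omitting the block `Bⱼ` (for `i < j`). -/
def removeReplace {m : ℕ} (B : Fin (m + 2) → List ℕ) (i j : Fin (m + 2)) (S : Finset ℕ) :
    Fin (m + 1) → List ℕ :=
  fun l => if (l : ℕ) < (j : ℕ) then
      (if (l : ℕ) = (i : ℕ) then starOp (B l.castSucc) (B j) S else B l.castSucc)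
    else B l.succ

/-- The degree-`m` part `K(n)_m`: the free `k`-module on `STuple(n,m)`. -/
abbrev Kmod (k : Type*) [CommRing k] (n m : ℕ) : Type _ := STuple n m →₀ k

open Classical in
/-- The basis element of `K(n)_m` attached to a family of blocks when it is an `m`-split
`(n+1)`-tuple (and `0` otherwise). -/
noncomputable def toBasisK (k : Type*) [CommRing k] (n m : ℕ) (B : Fin (m + 1) → List ℕ) :
    Kmod k n m :=
  if h : IsSTuple n m B then Finsupp.single ⟨B, h⟩ 1 else 0

/-- The map `D : K(n)_{m+1} → K(n)_m`, defined on a basis element `b = (B₀|…|B_{m+1})` by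
`D(b) = Σ_{0≤i<j≤m+1} (-1)ʲ Σ_{S ⊆ {1,…,|Bⱼ|-1}} (-1)^{|S|}
  (B₀ | … | Bᵢ₋₁ | Bᵢ *_S Bⱼ | Bᵢ₊₁ | … | B̂ⱼ | … | B_{m+1})`. -/
noncomputable def Dmap (k : Type*) [CommRing k] (n m : ℕ) :
    Kmod k n (m + 1) →ₗ[k] Kmod k n m :=
  Finsupp.lift (Kmod k n m) k (STuple n (m + 1))
    (fun b => ∑ j : Fin (m + 2), ∑ i : Fin (m + 2),
      if (i : ℕ) < (j : ℕ) then
        ((-1 : ℤ) ^ (j : ℕ)) • ∑ S ∈ (Finset.Icc 1 ((b.B j).length - 1)).powerset,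
          ((-1 : ℤ) ^ S.card) • toBasisK k n m (removeReplace b.B i j S)
      else 0)

namespace LeibnizComplex

open Finsupp

/-! ### Contractions up to a locally nilpotent defect -/

section Homotopy

variable {R M₁ M₂ M₃ : Type*} [Ring R] [AddCommGroup M₁] [AddCommGroup M₂] [AddCommGroup M₃]
  [Module R M₁] [Module R M₂] [Module R M₃]

-- A cycle `z` is homologous to its image under the defect, which is again a cycle.
theorem ker_eq_range_of_locally_nilpotent_defect {d : M₂ →ₗ[R] M₁} {d' : M₃ →ₗ[R] M₂}
    (s : M₁ →ₗ[R] M₂) (s' : M₂ →ₗ[R] M₃) (hdd' : d ∘ₗ d' = 0)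
    (hnil : ∀ z, ∃ r : ℕ, ((1 - s ∘ₗ d - d' ∘ₗ s' : Module.End R M₂) ^ r) z = 0) :
    LinearMap.ker d = LinearMap.range d' := by
  set N : Module.End R M₂ := 1 - s ∘ₗ d - d' ∘ₗ s' with hN
  refine le_antisymm (fun z hz => ?_) (LinearMap.range_le_ker_iff.2 hdd')
  obtain ⟨r, hr⟩ := hnil z
  induction r generalizing z with
  | zero => exact (show z = 0 from hr) ▸ zero_mem _
  | succ r ih =>
    have hdz : d z = 0 := hz
    have hNz : N z = z - d' (s' z) := by simp [hN, hdz]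
    have hdNz : d (N z) = 0 := by
      rw [hNz, map_sub, hdz, ← LinearMap.comp_apply, hdd', LinearMap.zero_apply, sub_zero]
    have hmem : N z ∈ LinearMap.range d' := ih (N z) hdNz (by rw [← hr, pow_succ]; rfl)
    exact sub_add_cancel z (d' (s' z)) ▸ add_mem (hNz ▸ hmem) ⟨_, rfl⟩

end Homotopy

section Triangular

variable {ι : Type*}

lemma supported_le_iff {R : Type*} [Semiring R] {s : Set ι} {P : Submodule R (ι →₀ R)} :
    supported R R s ≤ P ↔ ∀ i ∈ s, single i 1 ∈ P := by
  rw [supported_eq_span_single, Submodule.span_le, Set.image_subset_iff]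
  rfl

theorem exists_pow_apply_eq_zero_of_supported_lt {k α : Type*} [CommRing k] [Preorder α]
    [WellFoundedLT α] (w : ι → α) (N : Module.End k (ι →₀ k))
    (hN : ∀ i, N (single i 1) ∈ supported k k {j | w j < w i}) (z : ι →₀ k) :
    ∃ r : ℕ, (N ^ r) z = 0 := by
  have hsingle : ∀ i, single i 1 ∈ N.maxGenEigenspace 0 := fun i => by
    induction i using (InvImage.wf w wellFounded_lt).induction with
    | _ i ih =>
      obtain ⟨r, hr⟩ := (N.mem_maxGenEigenspace _ _).1 (supported_le_iff.2 ih (hN i))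
      exact (N.mem_maxGenEigenspace _ _).2 ⟨r + 1, by simpa [pow_succ] using hr⟩
  have hz : z ∈ supported k k Set.univ := by simp
  obtain ⟨r, hr⟩ :=
    (N.mem_maxGenEigenspace _ _).1 (supported_le_iff.2 (fun i _ => hsingle i) hz)
  rw [zero_smul] at hr
  exact ⟨r, sub_zero N ▸ hr⟩

end Triangular

/-! ### The Leibniz complex of the free Lie algebra -/

section LeibnizChain

/-- A nonempty list of letters, as its head and its tail. The block `(a, [b₁, …, b_p])` stands for
the left-normed bracket `[…[[a, b₁], b₂], …, b_p]`. -/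
abbrev Block (α : Type*) : Type _ := α × List α

/-- The free module on all tuples of blocks. A tuple is listed with its *last* block first, so that
appending a block is `List.cons`. -/
abbrev LeibnizChain (k α : Type*) [Ring k] : Type _ := List (Block α) →₀ k

variable (k : Type*) {α : Type*} [Ring k]

/-- The operator `ω ↦ (ω | z)`. -/
noncomputable def appendBlock (z : Block α) : Module.End k (LeibnizChain k α) :=
  Finsupp.lmapDomain k k (z :: ·)

/-- The values of `letterAction` on basis elements. -/
noncomputable def letterActionOn (c : α) : List (Block α) → LeibnizChain k α
  | [] => 0
  | z :: L => appendBlock k z (letterActionOn c L) + single ((z.1, z.2 ++ [c]) :: L) 1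

/-- The right action of the letter `c` on tuples, as a derivation:
`(B₀ | … | Bₘ) ↦ ∑ᵢ (B₀ | … | Bᵢ c | … | Bₘ)`. -/
noncomputable def letterAction (c : α) : Module.End k (LeibnizChain k α) :=
  Finsupp.linearCombination k (letterActionOn k c)

/-- The right action of the left-normed bracket `y` on tuples. The order of the commutators is that
of a right action. -/
noncomputable def bracketAction (y : Block α) : Module.End k (LeibnizChain k α) :=
  y.2.foldl (fun X c => ⁅letterAction k c, X⁆) (letterAction k y.1)

/-- The values of `leibnizDiff` on basis elements: `d (ω | y) = (d ω | y) + (-1)^|ω| ω · y`. -/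
noncomputable def leibnizDiffOn : List (Block α) → LeibnizChain k α
  | [] => 0
  | y :: L => appendBlock k y (leibnizDiffOn L) +
      bracketAction k y (single L ((-1 : k) ^ L.length))

/-- The Leibniz differential on tuples of blocks. -/
noncomputable def leibnizDiff : Module.End k (LeibnizChain k α) :=
  Finsupp.linearCombination k (leibnizDiffOn k)

/-- The sign operator `ω ↦ (-1)^|ω| ω`. -/
noncomputable def signOp : Module.End k (LeibnizChain k α) :=
  Finsupp.linearCombination k (fun L => single L ((-1 : k) ^ L.length))

variable {k}

lemma appendBlock_single (z : Block α) (L : List (Block α)) (a : k) :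
    appendBlock k z (single L a) = single (z :: L) a :=
  mapDomain_single

lemma end_ext_appendBlock {X Y : Module.End k (LeibnizChain k α)}
    (hnil : X (single [] 1) = Y (single [] 1))
    (happend : ∀ z x, X x = Y x → X (appendBlock k z x) = Y (appendBlock k z x)) : X = Y := by
  ext L : 2
  simp only [LinearMap.comp_apply, lsingle_apply]
  induction L with
  | nil => exact hnil
  | cons z L ih => simpa only [appendBlock_single] using happend z _ ih

lemma letterAction_single_nil (c : α) (a : k) : letterAction k c (single [] a) = 0 := by
  simp [letterAction, letterActionOn]

lemma leibnizDiff_single_nil (a : k) : leibnizDiff k (single ([] : List (Block α)) a) = 0 := by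
  simp [leibnizDiff, leibnizDiffOn]

lemma signOp_single (L : List (Block α)) :
    signOp k (single L 1) = ((-1 : ℤ) ^ L.length) • single L (1 : k) := by
  simp [signOp]

lemma letterAction_appendBlock (c : α) (z : Block α) (x : LeibnizChain k α) :
    letterAction k c (appendBlock k z x) =
      appendBlock k z (letterAction k c x) + appendBlock k (z.1, z.2 ++ [c]) x := by
  suffices h : letterAction k c * appendBlock k z =
      appendBlock k z * letterAction k c + appendBlock k (z.1, z.2 ++ [c]) from
    LinearMap.congr_fun h x
  ext L : 2
  simp [letterAction, letterActionOn, appendBlock_single]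

lemma leibnizDiff_appendBlock (z : Block α) (x : LeibnizChain k α) :
    leibnizDiff k (appendBlock k z x) =
      appendBlock k z (leibnizDiff k x) + bracketAction k z (signOp k x) := by
  suffices h : leibnizDiff k * appendBlock k z =
      appendBlock k z * leibnizDiff k + bracketAction k z * signOp k from LinearMap.congr_fun h x
  ext L : 2
  simp [leibnizDiff, leibnizDiffOn, signOp, appendBlock_single]

lemma signOp_appendBlock (z : Block α) (x : LeibnizChain k α) :
    signOp k (appendBlock k z x) = -appendBlock k z (signOp k x) := by
  suffices h : signOp k * appendBlock k z = -(appendBlock k z * signOp k) from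
    LinearMap.congr_fun h x
  ext L : 2
  simp [signOp, pow_succ, appendBlock_single]

lemma bracketAction_concat (a : α) (t : List α) (c : α) :
    bracketAction k (a, t ++ [c]) = ⁅letterAction k c, bracketAction k (a, t)⁆ := by
  simp [bracketAction, List.foldl_append]

lemma bracketAction_concat_apply (a : α) (t : List α) (c : α) (x : LeibnizChain k α) :
    bracketAction k (a, t ++ [c]) x =
      letterAction k c (bracketAction k (a, t) x) -
        bracketAction k (a, t) (letterAction k c x) := by
  rw [bracketAction_concat, Ring.lie_def]
  rfl

lemma bracketAction_single_nil (y : Block α) (b : k) : bracketAction k y (single [] b) = 0 := by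
  obtain ⟨a, t⟩ := y
  induction t using List.reverseRecOn with
  | nil => exact letterAction_single_nil a b
  | append_singleton t c ih => simp [bracketAction_concat_apply, ih, letterAction_single_nil]

lemma commute_bracketAction {X : Module.End k (LeibnizChain k α)}
    (hX : ∀ c, Commute X (letterAction k c)) (y : Block α) : Commute X (bracketAction k y) := by
  obtain ⟨a, t⟩ := y
  induction t using List.reverseRecOn with
  | nil => exact hX a
  | append_singleton t c ih =>
    rw [bracketAction_concat, Ring.lie_def]
    exact ((hX c).mul_right ih).sub_right (ih.mul_right (hX c))

lemma signOp_commute_letterAction (c : α) : Commute (signOp k) (letterAction k c) := by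
  refine end_ext_appendBlock ?_ fun z x hx => ?_
  · simp [letterAction_single_nil, signOp_single]
  · simp only [Module.End.mul_apply] at hx ⊢
    simp only [letterAction_appendBlock, signOp_appendBlock, map_neg, map_add, hx, neg_add]

-- On `(ω | z)` this is the recursion `z c ↦ [c, z]` of `bracketAction`.
lemma leibnizDiff_commute_letterAction (c : α) :
    Commute (leibnizDiff k) (letterAction k c) := by
  refine end_ext_appendBlock ?_ fun z x hx => ?_
  · simp [letterAction_single_nil, leibnizDiff_single_nil]
  · have hsign := LinearMap.congr_fun (signOp_commute_letterAction (k := k) c).eq x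
    simp only [Module.End.mul_apply] at hx hsign ⊢
    simp only [letterAction_appendBlock, leibnizDiff_appendBlock, map_add, hx, hsign,
      bracketAction_concat_apply]
    abel

lemma signOp_mul_leibnizDiff :
    signOp k * leibnizDiff k = -(leibnizDiff k * signOp k : Module.End k (LeibnizChain k α)) := by
  refine end_ext_appendBlock ?_ fun z x hx => ?_
  · simp [leibnizDiff_single_nil, signOp_single]
  · have hsign := LinearMap.congr_fun
      (commute_bracketAction (signOp_commute_letterAction (k := k)) z).eq (signOp k x)
    simp only [Module.End.mul_apply, LinearMap.neg_apply] at hx hsign ⊢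
    simp only [leibnizDiff_appendBlock, signOp_appendBlock, map_add, map_neg, hx, hsign]
    abel

theorem leibnizDiff_mul_self :
    leibnizDiff k * leibnizDiff k = (0 : Module.End k (LeibnizChain k α)) := by
  refine end_ext_appendBlock ?_ fun z x hx => ?_
  · simp [leibnizDiff_single_nil]
  · have hbracket := LinearMap.congr_fun
      (commute_bracketAction (leibnizDiff_commute_letterAction (k := k)) z).eq (signOp k x)
    have hsign := LinearMap.congr_fun (signOp_mul_leibnizDiff (k := k)) x
    simp only [Module.End.mul_apply, LinearMap.neg_apply, LinearMap.zero_apply]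
      at hx hbracket hsign ⊢
    simp only [leibnizDiff_appendBlock, map_add, hx, hbracket, hsign, map_neg, map_zero]
    abel

end LeibnizChain

/-! ### The product of blocks -/

section Star

/-- The list of the entries `y_ℓ`, `ℓ ∈ S`, in increasing order of `ℓ`, with `0` for the `ℓ` which
are out of range. -/
def entriesAt (y : List ℕ) (S : Finset ℕ) : List ℕ :=
  (S.sort (· ≤ ·)).map fun ℓ => y.getD ℓ 0

lemma starOp_cons_eq (x : List ℕ) (a : ℕ) (t : List ℕ) (S : Finset ℕ) :
    starOp x (a :: t) S = x ++ (entriesAt (a :: t) S).reverse ++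
      a :: entriesAt (a :: t) (Finset.Icc 1 t.length \ S) := by
  simp [starOp, entriesAt]

lemma length_entriesAt (y : List ℕ) (S : Finset ℕ) : (entriesAt y S).length = S.card := by
  simp [entriesAt]

lemma coe_entriesAt (y : List ℕ) (S : Finset ℕ) :
    (entriesAt y S : Multiset ℕ) = S.val.map fun ℓ => y.getD ℓ 0 := by
  rw [entriesAt, ← Multiset.map_coe, Finset.sort_eq]

lemma sort_insert_of_forall_lt {α : Type*} [LinearOrder α] {S : Finset α} {q : α}
    (h : ∀ x ∈ S, x < q) :
    (insert q S).sort (· ≤ ·) = S.sort (· ≤ ·) ++ [q] := by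
  have hq : q ∉ S := fun hmem => (h q hmem).false
  refine List.Perm.eq_of_pairwise' (r := (· ≤ ·)) (Finset.pairwise_sort _ _) ?_ ?_
  · simpa [List.pairwise_append, Finset.pairwise_sort] using fun a ha => (h a ha).le
  · rw [← Multiset.coe_eq_coe, Finset.sort_eq, Finset.insert_val_of_notMem hq, ← Multiset.coe_add,
      Finset.sort_eq, add_comm]
    rfl

lemma entriesAt_concat {y : List ℕ} {S : Finset ℕ} (hS : ∀ ℓ ∈ S, ℓ < y.length) (c : ℕ) :
    entriesAt (y ++ [c]) S = entriesAt y S :=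
  List.map_congr_left fun ℓ hℓ => List.getD_append _ _ _ _ (hS ℓ (by simpa using hℓ))

lemma entriesAt_concat_insert_length {y : List ℕ} {S : Finset ℕ} (hS : ∀ ℓ ∈ S, ℓ < y.length)
    (c : ℕ) : entriesAt (y ++ [c]) (insert y.length S) = entriesAt y S ++ [c] := by
  rw [entriesAt, sort_insert_of_forall_lt hS, List.map_append, ← entriesAt,
    entriesAt_concat hS]
  simp

lemma Icc_one_length_concat (t : List ℕ) (c : ℕ) :
    Finset.Icc 1 (t ++ [c]).length = insert (t.length + 1) (Finset.Icc 1 t.length) := by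
  ext ℓ
  simp only [List.length_append, List.length_singleton, Finset.mem_Icc, Finset.mem_insert]
  omega

lemma lt_length_cons_of_mem_Icc (a : ℕ) (t : List ℕ) :
    ∀ ℓ ∈ Finset.Icc 1 t.length, ℓ < (a :: t).length := by
  simp only [Finset.mem_Icc, List.length_cons]
  omega

lemma entriesAt_cons_Icc (a : ℕ) (t : List ℕ) :
    entriesAt (a :: t) (Finset.Icc 1 t.length) = t := by
  induction t using List.reverseRecOn with
  | nil => simp [entriesAt]
  | append_singleton t c ih =>
    rw [Icc_one_length_concat, ← List.cons_append]
    exact (entriesAt_concat_insert_length (lt_length_cons_of_mem_Icc a t) c).trans (by rw [ih])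

lemma entriesAt_append_entriesAt_sdiff_perm (y : List ℕ) {S U : Finset ℕ} (hS : S ⊆ U) :
    (entriesAt y S ++ entriesAt y (U \ S)).Perm (entriesAt y U) := by
  rw [← Multiset.coe_eq_coe, ← Multiset.coe_add, coe_entriesAt, coe_entriesAt, coe_entriesAt,
    ← Multiset.map_add, Finset.sdiff_val, add_tsub_cancel_of_le (Finset.val_le_iff.2 hS)]

lemma entriesAt_cons_perm (a : ℕ) {t : List ℕ} {S : Finset ℕ} (hS : S ⊆ Finset.Icc 1 t.length) :
    (entriesAt (a :: t) S ++ entriesAt (a :: t) (Finset.Icc 1 t.length \ S)).Perm t :=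
  (entriesAt_append_entriesAt_sdiff_perm _ hS).trans (.of_eq (entriesAt_cons_Icc a t))

lemma starOp_concat_of_subset (x : List ℕ) (a : ℕ) {t : List ℕ} (c : ℕ) {S : Finset ℕ}
    (hS : S ⊆ Finset.Icc 1 t.length) :
    starOp x (a :: (t ++ [c])) S = starOp x (a :: t) S ++ [c] := by
  have hlt := lt_length_cons_of_mem_Icc a t
  have hnotMem : t.length + 1 ∉ S := fun h => by simpa using hS h
  rw [starOp_cons_eq, starOp_cons_eq, Icc_one_length_concat,
    Finset.insert_sdiff_of_notMem _ hnotMem, ← List.cons_append,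
    entriesAt_concat fun ℓ hℓ => hlt ℓ (hS hℓ),
    ← List.length_cons (a := a),
    entriesAt_concat_insert_length fun ℓ hℓ => hlt ℓ (Finset.sdiff_subset hℓ)]
  simp

lemma starOp_concat_insert (x : List ℕ) (a : ℕ) {t : List ℕ} (c : ℕ) {S : Finset ℕ}
    (hS : S ⊆ Finset.Icc 1 t.length) :
    starOp x (a :: (t ++ [c])) (insert (t.length + 1) S) = starOp (x ++ [c]) (a :: t) S := by
  have hlt := lt_length_cons_of_mem_Icc a t
  have hsdiff : Finset.Icc 1 (t ++ [c]).length \ insert (t.length + 1) S =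
      Finset.Icc 1 t.length \ S := by
    rw [Icc_one_length_concat, Finset.insert_sdiff_insert,
      Finset.sdiff_insert_of_notMem (by simp)]
  rw [starOp_cons_eq, starOp_cons_eq, hsdiff, ← List.cons_append, ← List.length_cons (a := a),
    entriesAt_concat_insert_length fun ℓ hℓ => hlt ℓ (hS hℓ),
    entriesAt_concat fun ℓ hℓ => hlt ℓ (Finset.sdiff_subset hℓ)]
  simp

lemma starOp_empty (x : List ℕ) {y : List ℕ} (hy : y ≠ []) : starOp x y ∅ = x ++ y := by
  obtain ⟨a, t, rfl⟩ := List.exists_cons_of_ne_nil hy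
  rw [starOp_cons_eq, Finset.sdiff_empty, entriesAt_cons_Icc]
  simp [entriesAt]

lemma starOp_perm (x : List ℕ) {y : List ℕ} (hy : y ≠ []) {S : Finset ℕ}
    (hS : S ⊆ Finset.Icc 1 (y.length - 1)) : (starOp x y S).Perm (x ++ y) := by
  obtain ⟨a, t, rfl⟩ := List.exists_cons_of_ne_nil hy
  rw [starOp_cons_eq, List.append_assoc]
  refine (List.perm_middle.trans (.cons a ?_)).append_left x
  exact ((List.reverse_perm _).append_right _).trans (entriesAt_cons_perm a hS)

lemma starOp_ne_nil (x y : List ℕ) (S : Finset ℕ) : starOp x y S ≠ [] := by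
  simp [starOp]

lemma headI_starOp {x : List ℕ} (hx : x ≠ []) (y : List ℕ) (S : Finset ℕ) :
    (starOp x y S).headI = x.headI := by
  obtain ⟨h, s, rfl⟩ := List.exists_cons_of_ne_nil hx
  rfl

lemma tail_starOp {x : List ℕ} (hx : x ≠ []) (y : List ℕ) (S : Finset ℕ) :
    (starOp x y S).tail = starOp x.tail y S := by
  obtain ⟨h, s, rfl⟩ := List.exists_cons_of_ne_nil hx
  rfl

variable {M M' : Type*} [AddCommGroup M] [AddCommGroup M']

/-- The signed sum `∑_S (-1)^|S| x *_S y`, which expands the bracket of `x` and `y`, evaluated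
through a function `f` of the block `x *_S y`. -/
def starSum (f : List ℕ → M) (x y : List ℕ) : M :=
  ∑ S ∈ (Finset.Icc 1 (y.length - 1)).powerset, ((-1 : ℤ) ^ S.card) • f (starOp x y S)

lemma map_starSum (φ : M →+ M') (f : List ℕ → M) (x y : List ℕ) :
    φ (starSum f x y) = starSum (fun w => φ (f w)) x y := by
  simp only [starSum, map_sum, map_zsmul]

lemma starSum_add (f g : List ℕ → M) (x y : List ℕ) :
    starSum (fun w => f w + g w) x y = starSum f x y + starSum g x y := by
  simp only [starSum, smul_add, Finset.sum_add_distrib]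

lemma starSum_congr {f g : List ℕ → M} {x y : List ℕ}
    (h : ∀ S ⊆ Finset.Icc 1 (y.length - 1), f (starOp x y S) = g (starOp x y S)) :
    starSum f x y = starSum g x y :=
  Finset.sum_congr rfl fun S hS => by rw [h S (Finset.mem_powerset.1 hS)]

lemma starSum_singleton (f : List ℕ → M) (x : List ℕ) (a : ℕ) :
    starSum f x [a] = f (x ++ [a]) := by
  simp [starSum, starOp]

-- The identity `[x, [y, c]] = [[x, y], c] - [[x, c], y]`, where `y = a t`.
lemma starSum_concat (f : List ℕ → M) (x : List ℕ) (a : ℕ) (t : List ℕ) (c : ℕ) :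
    starSum f x (a :: (t ++ [c])) =
      starSum (fun w => f (w ++ [c])) x (a :: t) - starSum f (x ++ [c]) (a :: t) := by
  have hnotMem : t.length + 1 ∉ Finset.Icc 1 t.length := by simp
  simp only [starSum, List.length_cons, Nat.add_sub_cancel]
  rw [Icc_one_length_concat, Finset.sum_powerset_insert hnotMem, sub_eq_add_neg,
    ← Finset.sum_neg_distrib]
  refine congrArg₂ (· + ·) (Finset.sum_congr rfl fun S hS => ?_)
    (Finset.sum_congr rfl fun S hS => ?_)
  · rw [starOp_concat_of_subset x a c (Finset.mem_powerset.1 hS)]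
  · rw [starOp_concat_insert x a c (Finset.mem_powerset.1 hS),
      Finset.card_insert_of_notMem fun h => hnotMem (Finset.mem_powerset.1 hS h), pow_succ,
      mul_neg_one, neg_smul]

lemma starSum_sub_mem {P : AddSubgroup M} {f : List ℕ → M} {x y : List ℕ} (hy : y ≠ [])
    (h : ∀ S ⊆ Finset.Icc 1 (y.length - 1), S.Nonempty → f (starOp x y S) ∈ P) :
    starSum f x y - f (x ++ y) ∈ P := by
  rw [starSum, ← Finset.add_sum_erase _ _ (Finset.empty_mem_powerset _), Finset.card_empty,
    pow_zero, one_smul, starOp_empty x hy, add_sub_cancel_left]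
  refine sum_mem fun S hS => zsmul_mem ?_ _
  obtain ⟨hne, hS⟩ := Finset.mem_erase.1 hS
  exact h S (Finset.mem_powerset.1 hS) (Finset.nonempty_iff_ne_empty.2 hne)

lemma starSum_mem {P : AddSubgroup M} {f : List ℕ → M} {x y : List ℕ}
    (h : ∀ S ⊆ Finset.Icc 1 (y.length - 1), f (starOp x y S) ∈ P) : starSum f x y ∈ P :=
  sum_mem fun S hS => zsmul_mem (h S (Finset.mem_powerset.1 hS)) _

end Star

/-! ### The differential as a sum over pairs of blocks -/

section LeibnizSum

variable {M M' : Type*} [AddCommGroup M] [AddCommGroup M'] {m : ℕ}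

/-- The sum defining `D`, evaluated through a function `g` of the resulting families. The index `i`
of the block which absorbs `Bⱼ` ranges over the positions left after the removal of `Bⱼ`. -/
def leibnizSum (g : (Fin m → List ℕ) → M) (B : Fin (m + 1) → List ℕ) : M :=
  ∑ j : Fin (m + 1), ∑ i : Fin m, if i.castSucc < j then
    ((-1 : ℤ) ^ (j : ℕ)) •
      starSum (fun w => g (Function.update (j.removeNth B) i w)) (B i.castSucc) (B j)
  else 0

lemma map_leibnizSum (φ : M →+ M') (g : (Fin m → List ℕ) → M) (B : Fin (m + 1) → List ℕ) :
    φ (leibnizSum g B) = leibnizSum (fun A => φ (g A)) B := by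
  simp only [leibnizSum, map_sum, apply_ite φ, map_zero, map_zsmul, map_starSum]

lemma leibnizSum_congr {g g' : (Fin m → List ℕ) → M} {B : Fin (m + 1) → List ℕ}
    (h : ∀ (i : Fin m) (j : Fin (m + 1)), i.castSucc < j →
      ∀ S ⊆ Finset.Icc 1 ((B j).length - 1),
        g (Function.update (j.removeNth B) i (starOp (B i.castSucc) (B j) S)) =
          g' (Function.update (j.removeNth B) i (starOp (B i.castSucc) (B j) S))) :
    leibnizSum g B = leibnizSum g' B := by
  refine Finset.sum_congr rfl fun j _ => Finset.sum_congr rfl fun i _ => ?_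
  split_ifs with hij
  · exact congrArg _ (starSum_congr (h i j hij))
  · rfl

lemma removeNth_castSucc_eq_snoc {α : Type*} (B : Fin (m + 2) → α) (j : Fin (m + 1)) :
    j.castSucc.removeNth B =
      Fin.snoc (α := fun _ => α) (j.removeNth (Fin.init B)) (B (Fin.last (m + 1))) := by
  funext l
  induction l using Fin.lastCases with
  | last => simp [Fin.removeNth]
  | cast l => simp [Fin.removeNth, Fin.init]

lemma leibnizSum_eq_snoc_add (g : (Fin (m + 1) → List ℕ) → M) (B : Fin (m + 2) → List ℕ) :
    leibnizSum g B =
      leibnizSum (fun A => g (Fin.snoc (α := fun _ => List ℕ) A (B (Fin.last (m + 1)))))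
        (Fin.init B) +
      ((-1 : ℤ) ^ (m + 1)) • ∑ i, starSum (fun w => g (Function.update (Fin.init B) i w))
        (Fin.init B i) (B (Fin.last (m + 1))) := by
  have hlast : ∀ j : Fin (m + 1), ¬ (Fin.last m).castSucc < j.castSucc := fun j =>
    not_lt.2 (Fin.castSucc_le_castSucc_iff.2 (Fin.le_last j))
  rw [leibnizSum, Fin.sum_univ_castSucc, leibnizSum]
  refine congrArg₂ (· + ·) (Finset.sum_congr rfl fun j _ => ?_) ?_
  · rw [Fin.sum_univ_castSucc, if_neg (hlast j), add_zero]
    simp only [Fin.castSucc_lt_castSucc_iff, removeNth_castSucc_eq_snoc, ← Fin.snoc_update]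
    rfl
  · simp only [Fin.castSucc_lt_last, if_true, Fin.removeNth_last, Finset.smul_sum]
    rfl

lemma removeReplace_castSucc (B : Fin (m + 2) → List ℕ) {i : Fin (m + 1)} {j : Fin (m + 2)}
    (hij : i.castSucc < j) (S : Finset ℕ) :
    removeReplace B i.castSucc j S =
      Function.update (j.removeNth B) i (starOp (B i.castSucc) (B j) S) := by
  funext l
  obtain rfl | hl := eq_or_ne l i
  · have : (l : ℕ) < j := hij
    simp [removeReplace, this]
  · have hl' : (l : ℕ) ≠ i := Fin.val_ne_of_ne hl
    rw [Function.update_of_ne hl, Fin.removeNth_apply, Fin.succAbove]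
    simp only [removeReplace, hl', if_false, Fin.lt_def, Fin.val_castSucc, apply_ite B]

lemma Dmap_single (k : Type*) [CommRing k] {n : ℕ} (b : STuple n (m + 1)) :
    Dmap k n m (single b 1) = leibnizSum (toBasisK k n m) b.B := by
  simp only [Dmap, lift_apply, zero_smul, sum_single_index, one_smul, leibnizSum,
    Fin.val_fin_lt]
  refine Finset.sum_congr rfl fun j _ => ?_
  rw [Fin.sum_univ_castSucc, if_neg (not_lt.2 (Fin.le_last j)), add_zero]
  refine Finset.sum_congr rfl fun i _ => ?_
  split_ifs with hij
  · simp only [starSum, removeReplace_castSucc _ hij]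
  · rfl

end LeibnizSum

section Encoding

variable {k : Type*} [Ring k] {m : ℕ}

/-- A nonempty list of natural numbers as a block; the empty list has the junk value `(0, [])`. -/
def toBlock (l : List ℕ) : Block ℕ := (l.headI, l.tail)

/-- A family of lists as a tuple of blocks, in the reversed order used by `LeibnizChain`. -/
def encode (B : Fin m → List ℕ) : List (Block ℕ) := (List.ofFn fun i => toBlock (B i)).reverse

lemma encode_succ (B : Fin (m + 1) → List ℕ) :
    encode B = toBlock (B (Fin.last m)) :: encode (Fin.init B) := by
  rw [encode, List.ofFn_succ', List.concat_eq_append, List.reverse_append]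
  rfl

lemma encode_snoc (A : Fin m → List ℕ) (z : List ℕ) :
    encode (Fin.snoc (α := fun _ => List ℕ) A z) = toBlock z :: encode A := by
  rw [encode_succ, Fin.snoc_last, Fin.init_snoc]

lemma length_encode (B : Fin m → List ℕ) : (encode B).length = m := by simp [encode]

lemma toBlock_injOn : Set.InjOn toBlock {l | l ≠ []} := by
  rintro (_ | ⟨a, t⟩) hx (_ | ⟨b, s⟩) hy h <;> simp_all [toBlock]

lemma encode_injOn : Set.InjOn (encode (m := m)) {B | ∀ i, B i ≠ []} := fun A hA B hB h => by
  have hblocks := List.ofFn_injective (List.reverse_injective h)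
  exact funext fun i => toBlock_injOn (hA i) (hB i) (congrFun hblocks i)

lemma bracketAction_appendBlock (a h : ℕ) (t s : List ℕ) (x : LeibnizChain k ℕ) :
    bracketAction k (a, t) (appendBlock k (h, s) x) =
      appendBlock k (h, s) (bracketAction k (a, t) x) +
        starSum (fun w => appendBlock k (h, w) x) s (a :: t) := by
  induction t using List.reverseRecOn generalizing s x with
  | nil => rw [starSum_singleton]; exact letterAction_appendBlock a (h, s) x
  | append_singleton t c ih =>
    have hstar := map_starSum (letterAction k c).toAddMonoidHom
      (fun w => appendBlock k (h, w) x) s (a :: t)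
    simp only [LinearMap.toAddMonoidHom_coe, letterAction_appendBlock, starSum_add] at hstar
    simp only [bracketAction_concat_apply, letterAction_appendBlock, ih, map_add, hstar,
      map_sub, starSum_concat]
    abel

lemma bracketAction_toBlock_appendBlock {y z : List ℕ} (hy : y ≠ []) (hz : z ≠ [])
    (x : LeibnizChain k ℕ) :
    bracketAction k (toBlock y) (appendBlock k (toBlock z) x) =
      appendBlock k (toBlock z) (bracketAction k (toBlock y) x) +
        starSum (fun w => appendBlock k (toBlock w) x) z y := by
  obtain ⟨a, t, rfl⟩ := List.exists_cons_of_ne_nil hy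
  obtain ⟨h, s, rfl⟩ := List.exists_cons_of_ne_nil hz
  exact bracketAction_appendBlock a h t s x

lemma bracketAction_single_encode {y : List ℕ} (hy : y ≠ []) {B : Fin m → List ℕ}
    (hB : ∀ i, B i ≠ []) :
    bracketAction k (toBlock y) (single (encode B) 1) =
      ∑ i, starSum (fun w => single (encode (Function.update B i w)) 1) (B i) y := by
  induction m with
  | zero => simpa [encode] using bracketAction_single_nil (toBlock y) (1 : k)
  | succ m ih =>
    have hinit (i : Fin m) (w : List ℕ) : encode (Function.update B i.castSucc w) =
        toBlock (B (Fin.last m)) :: encode (Function.update (Fin.init B) i w) := by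
      rw [encode_succ, Fin.init_update_castSucc,
        Function.update_of_ne (Fin.castSucc_lt_last i).ne']
    have hlast (w : List ℕ) : encode (Function.update B (Fin.last m) w) =
        toBlock w :: encode (Fin.init B) := by
      rw [encode_succ, Fin.init_update_last, Function.update_self]
    rw [encode_succ, ← appendBlock_single, bracketAction_toBlock_appendBlock hy (hB _),
      ih (B := Fin.init B) fun i => hB i.castSucc, Fin.sum_univ_castSucc, map_sum]
    simp only [hinit, hlast, ← appendBlock_single]
    exact congrArg (· + _) (Finset.sum_congr rfl fun i _ =>
      map_starSum (appendBlock k (toBlock (B (Fin.last m)))).toAddMonoidHom _ _ _)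

theorem leibnizDiff_single_encode {B : Fin (m + 1) → List ℕ} (hB : ∀ i, B i ≠ []) :
    leibnizDiff k (single (encode B) 1) = leibnizSum (fun A => single (encode A) 1) B := by
  induction m with
  | zero =>
    rw [encode_succ, ← appendBlock_single, leibnizDiff_appendBlock, signOp_single]
    simp [encode, leibnizDiff_single_nil, bracketAction_single_nil, leibnizSum]
  | succ m ih =>
    rw [encode_succ, ← appendBlock_single, leibnizDiff_appendBlock, signOp_single, map_zsmul,
      length_encode, bracketAction_single_encode (B := Fin.init B) (hB _) fun i => hB i.castSucc,
      ih (B := Fin.init B) fun i => hB i.castSucc, leibnizSum_eq_snoc_add]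
    simp only [encode_snoc, ← appendBlock_single]
    exact congrArg (· + _)
      (map_leibnizSum (appendBlock k (toBlock (B (Fin.last (m + 1))))).toAddMonoidHom _ _)

end Encoding

/-! ### Split tuples form a subcomplex -/

section Subcomplex

variable {n m : ℕ}

lemma _root_.STuple.ext {a b : STuple n m} (h : a.B = b.B) : a = b := by
  cases a
  congr

lemma flatten_ofFn_update_removeNth_perm {α : Type*} {B : Fin (m + 1) → List α} {i : Fin m}
    {j : Fin (m + 1)} {w : List α} (hw : w.Perm (B (j.succAbove i) ++ B j)) :
    (List.ofFn (Function.update (j.removeNth B) i w)).flatten.Perm (List.ofFn B).flatten := by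
  classical
  refine List.perm_iff_count.2 fun a => ?_
  have hcount (l : Fin m) : (Function.update (j.removeNth B) i w l).count a =
      (if l = i then (B j).count a else 0) + (B (j.succAbove l)).count a := by
    obtain rfl | hl := eq_or_ne l i
    · simp [hw.count_eq, add_comm]
    · simp [hl, Fin.removeNth]
  simp only [List.count_flatten, List.map_ofFn, List.sum_ofFn, Function.comp_apply, hcount,
    Finset.sum_add_distrib, Fin.sum_univ_succAbove (fun l => (B l).count a) j,
    Finset.sum_ite_eq', Finset.mem_univ, if_true]

lemma _root_.IsSTuple.headI_le {B : Fin (m + 1) → List ℕ} (h : IsSTuple n m B) {i : Fin (m + 1)}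
    {x : ℕ} (hx : x ∈ B i) : (B i).headI ≤ x := by
  have htail := h.2.2.2 i x
  obtain ⟨a, t, hB⟩ := List.exists_cons_of_ne_nil (h.1 i)
  rw [hB] at hx htail ⊢
  exact (List.mem_cons.1 hx).elim Eq.ge fun hx => (htail hx).le

theorem _root_.IsSTuple.update_removeNth {B : Fin (m + 2) → List ℕ} (h : IsSTuple n (m + 1) B)
    {i : Fin (m + 1)} {j : Fin (m + 2)} (hij : i.castSucc < j) {S : Finset ℕ}
    (hS : S ⊆ Finset.Icc 1 ((B j).length - 1)) :
    IsSTuple n m (Function.update (j.removeNth B) i (starOp (B i.castSucc) (B j) S)) := by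
  have hji : j.succAbove i = i.castSucc := Fin.succAbove_of_castSucc_lt j i hij
  rw [← hji] at hij ⊢
  set A := Function.update (j.removeNth B) i (starOp (B (j.succAbove i)) (B j) S) with hA
  have hAi : A i = starOp (B (j.succAbove i)) (B j) S := Function.update_self ..
  have hAl {l} (hl : l ≠ i) : A l = B (j.succAbove l) := Function.update_of_ne hl ..
  have hhead (l) : (A l).headI = (B (j.succAbove l)).headI := by
    obtain rfl | hl := eq_or_ne l i
    · rw [hAi, headI_starOp (h.1 _)]
    · rw [hAl hl]
  refine ⟨fun l => ?_, ?_, fun l l' hl => ?_, fun l x hx => ?_⟩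
  · obtain rfl | hl := eq_or_ne l i
    · exact hAi ▸ starOp_ne_nil _ _ _
    · exact hAl hl ▸ h.1 _
  · exact (flatten_ofFn_update_removeNth_perm (starOp_perm _ (h.1 j) hS)).trans h.2.1
  · rw [hhead, hhead]
    exact h.2.2.1 _ _ (Fin.strictMono_succAbove j hl)
  · rw [hhead]
    obtain rfl | hl := eq_or_ne l i
    · rw [hAi, tail_starOp (h.1 _), (starOp_perm _ (h.1 j) hS).mem_iff, List.mem_append] at hx
      exact hx.elim (h.2.2.2 _ x) fun hx => (h.2.2.1 _ _ hij).trans_le (h.headI_le hx)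
    · exact h.2.2.2 _ x (hAl hl ▸ hx)

variable (k : Type*) [CommRing k]

lemma toBasisK_of_isSTuple {B : Fin (m + 1) → List ℕ} (h : IsSTuple n m B) :
    toBasisK k n m B = single ⟨B, h⟩ 1 :=
  dif_pos h

/-- The inclusion of `K(n)_m` into the module of Leibniz chains on the alphabet `ℕ`. -/
noncomputable def toLeibnizChain (n m : ℕ) : Kmod k n m →ₗ[k] LeibnizChain k ℕ :=
  lmapDomain k k fun b => encode b.B

lemma toLeibnizChain_single (b : STuple n m) :
    toLeibnizChain k n m (single b 1) = single (encode b.B) 1 :=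
  mapDomain_single

lemma toLeibnizChain_injective : Function.Injective (toLeibnizChain k n m) :=
  mapDomain_injective fun a b h => STuple.ext (encode_injOn a.prop.1 b.prop.1 h)

lemma toLeibnizChain_comp_Dmap :
    toLeibnizChain k n m ∘ₗ Dmap k n m = leibnizDiff k ∘ₗ toLeibnizChain k n (m + 1) := by
  ext b : 2
  simp only [LinearMap.comp_apply, lsingle_apply]
  rw [Dmap_single, toLeibnizChain_single, leibnizDiff_single_encode b.prop.1]
  refine (map_leibnizSum (toLeibnizChain k n m).toAddMonoidHom _ _).trans
    (leibnizSum_congr fun i j hij S hS => ?_)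
  rw [toBasisK_of_isSTuple k (b.prop.update_removeNth hij hS)]
  exact toLeibnizChain_single k _

theorem Dmap_comp_Dmap : Dmap k n m ∘ₗ Dmap k n (m + 1) = 0 := by
  rw [← LinearMap.cancel_left (toLeibnizChain_injective k), LinearMap.comp_zero,
    ← LinearMap.comp_assoc, toLeibnizChain_comp_Dmap, LinearMap.comp_assoc,
    toLeibnizChain_comp_Dmap, ← LinearMap.comp_assoc, ← Module.End.mul_eq_comp,
    leibnizDiff_mul_self, LinearMap.zero_comp]

end Subcomplex

/-! ### The position of the entry `1` -/

section SplitMerge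

/-- The entries of `l` before the first `1`. -/
def onePrefix (l : List ℕ) : List ℕ := l.takeWhile (· ≠ 1)

/-- The entries of `l` from the first `1` on; empty if `1` does not occur. -/
def oneSuffix (l : List ℕ) : List ℕ := l.dropWhile (· ≠ 1)

lemma onePrefix_append_oneSuffix (l : List ℕ) : onePrefix l ++ oneSuffix l = l :=
  List.takeWhile_append_dropWhile

lemma one_notMem_onePrefix (l : List ℕ) : 1 ∉ onePrefix l := fun h => by
  simpa using List.mem_takeWhile_imp h

lemma onePrefix_append_one_cons {u : List ℕ} (hu : 1 ∉ u) (v : List ℕ) :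
    onePrefix (u ++ 1 :: v) = u := by
  rw [onePrefix, List.takeWhile_append_of_pos fun a ha => by simpa using ne_of_mem_of_not_mem ha hu]
  simp

lemma oneSuffix_append_one_cons {u : List ℕ} (hu : 1 ∉ u) (v : List ℕ) :
    oneSuffix (u ++ 1 :: v) = 1 :: v := by
  rw [oneSuffix, List.dropWhile_append_of_pos fun a ha => by simpa using ne_of_mem_of_not_mem ha hu]
  simp

lemma oneSuffix_eq_nil {l : List ℕ} : oneSuffix l = [] ↔ 1 ∉ l := by
  rw [oneSuffix, List.dropWhile_eq_nil_iff]
  simp only [decide_eq_true_eq]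
  exact ⟨fun h h1 => h 1 h1 rfl, fun h a ha => ne_of_mem_of_not_mem ha h⟩

lemma length_oneSuffix_starOp_lt {x t : List ℕ} {S : Finset ℕ} (hx : 1 ∉ x) (ht : 1 ∉ t)
    (hS : S ⊆ Finset.Icc 1 t.length) (hne : S.Nonempty) :
    (oneSuffix (starOp x (1 :: t) S)).length < (1 :: t).length := by
  have hmoved : 1 ∉ entriesAt (1 :: t) S := fun h =>
    ht ((entriesAt_cons_perm 1 hS).mem_iff.1 (List.mem_append_left _ h))
  have hlen := (entriesAt_cons_perm 1 hS).length_eq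
  have hpos := hne.card_pos
  rw [List.length_append, length_entriesAt] at hlen
  rw [starOp_cons_eq, oneSuffix_append_one_cons (by simp [hx, hmoved]), List.length_cons,
    List.length_cons]
  lia

variable {m : ℕ}

/-- The family `(0u | 1v | B₁ | …)` obtained from `(0u1v | B₁ | …)`. -/
def splitFirstBlock (B : Fin (m + 1) → List ℕ) : Fin (m + 2) → List ℕ :=
  Fin.cons (onePrefix (B 0)) (Fin.cons (oneSuffix (B 0)) (Fin.tail B))

/-- The family `(B₀B₁ | B₂ | …)`. -/
def mergeFirstBlocks (B : Fin (m + 2) → List ℕ) : Fin (m + 1) → List ℕ :=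
  Fin.cons (B 0 ++ B 1) (Fin.tail (Fin.tail B))

lemma mergeFirstBlocks_eq_update (B : Fin (m + 2) → List ℕ) :
    mergeFirstBlocks B = Function.update (Fin.removeNth 1 B) 0 (B 0 ++ B 1) := by
  funext l
  cases l using Fin.cases <;> simp [mergeFirstBlocks, Fin.removeNth, Fin.tail]

lemma mergeFirstBlocks_splitFirstBlock (B : Fin (m + 1) → List ℕ) :
    mergeFirstBlocks (splitFirstBlock B) = B := by
  funext l
  cases l using Fin.cases
  · exact onePrefix_append_oneSuffix _
  · rfl

lemma splitFirstBlock_mergeFirstBlocks {B : Fin (m + 2) → List ℕ} (h0 : 1 ∉ B 0) {t : List ℕ}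
    (h1 : B 1 = 1 :: t) : splitFirstBlock (mergeFirstBlocks B) = B := by
  funext l
  refine Fin.cases ?_ (Fin.cases ?_ fun l => rfl) l
  · exact (congrArg (fun y => onePrefix (B 0 ++ y)) h1).trans (onePrefix_append_one_cons h0 t)
  · exact (congrArg (fun y => oneSuffix (B 0 ++ y)) h1).trans
      ((oneSuffix_append_one_cons h0 t).trans h1.symm)

lemma leibnizSum_add_mergeFirstBlocks_mem {M : Type*} [AddCommGroup M] {P : AddSubgroup M}
    {g : (Fin (m + 1) → List ℕ) → M} {B : Fin (m + 2) → List ℕ} (hB : B 1 ≠ [])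
    (hone : ∀ S ⊆ Finset.Icc 1 ((B 1).length - 1), S.Nonempty →
      g (Function.update (Fin.removeNth 1 B) 0 (starOp (B 0) (B 1) S)) ∈ P)
    (hne : ∀ (i : Fin (m + 1)) (j : Fin (m + 2)), i.castSucc < j → j ≠ 1 →
      ∀ S ⊆ Finset.Icc 1 ((B j).length - 1),
        g (Function.update (j.removeNth B) i (starOp (B i.castSucc) (B j) S)) ∈ P) :
    leibnizSum g B + g (mergeFirstBlocks B) ∈ P := by
  have hnlt (i : Fin (m + 1)) (hi : i ≠ 0) : ¬ i.castSucc < 1 := fun h =>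
    hi (Fin.ext (Nat.lt_one_iff.1 h))
  rw [leibnizSum, ← Finset.add_sum_erase _ _ (Finset.mem_univ 1), add_right_comm]
  refine add_mem ?_ (sum_mem fun j hj => sum_mem fun i _ => ?_)
  · rw [Finset.sum_eq_single 0 (fun i _ hi => if_neg (hnlt i hi)) (by simp),
      Fin.castSucc_zero, if_pos Fin.zero_lt_one, Fin.val_one, pow_one, neg_one_zsmul,
      mergeFirstBlocks_eq_update, neg_add_eq_sub, ← neg_sub]
    exact neg_mem (starSum_sub_mem
      (f := fun w => g (Function.update (Fin.removeNth 1 B) 0 w)) hB hone)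
  · split_ifs with hij
    · exact zsmul_mem (starSum_mem (hne i j hij (Finset.ne_of_mem_erase hj))) _
    · exact zero_mem P

end SplitMerge

section Position

variable {n m : ℕ}

lemma _root_.IsSTuple.nodup {B : Fin (m + 1) → List ℕ} (h : IsSTuple n m B) (i : Fin (m + 1)) :
    (B i).Nodup :=
  (List.nodup_flatten.1 (h.2.1.nodup_iff.2 List.nodup_range)).1 _ (List.mem_ofFn.2 ⟨i, rfl⟩)

lemma _root_.IsSTuple.eq_of_mem_of_mem {B : Fin (m + 1) → List ℕ} (h : IsSTuple n m B)
    {i j : Fin (m + 1)} {x : ℕ} (hi : x ∈ B i) (hj : x ∈ B j) : i = j := by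
  have hdisj := List.pairwise_ofFn.1 (List.nodup_flatten.1 (h.2.1.nodup_iff.2 List.nodup_range)).2
  by_contra hij
  exact (lt_or_gt_of_ne hij).elim (fun hlt => hdisj hlt hi hj) (fun hlt => hdisj hlt hj hi)

lemma _root_.IsSTuple.exists_mem_iff {B : Fin (m + 1) → List ℕ} (h : IsSTuple n m B) {x : ℕ} :
    (∃ i, x ∈ B i) ↔ x ≤ n := by
  rw [← Nat.lt_succ_iff, ← List.mem_range, ← h.2.1.mem_iff, List.mem_flatten]
  simp only [List.mem_ofFn, exists_exists_eq_and]

lemma _root_.IsSTuple.headI_mem {B : Fin (m + 1) → List ℕ} (h : IsSTuple n m B)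
    (i : Fin (m + 1)) : (B i).headI ∈ B i := by
  obtain ⟨a, t, hB⟩ := List.exists_cons_of_ne_nil (h.1 i)
  simp [hB]

lemma _root_.IsSTuple.headI_strictMono {B : Fin (m + 1) → List ℕ} (h : IsSTuple n m B) :
    StrictMono fun i => (B i).headI :=
  fun i j hij => h.2.2.1 i j hij

lemma _root_.IsSTuple.headI_zero {B : Fin (m + 1) → List ℕ} (h : IsSTuple n m B) :
    (B 0).headI = 0 := by
  obtain ⟨i, hi⟩ := h.exists_mem_iff.2 n.zero_le
  exact Nat.le_zero.1 ((h.headI_strictMono.monotone i.zero_le).trans (h.headI_le hi))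

lemma _root_.IsSTuple.exists_eq_one_cons {B : Fin (m + 2) → List ℕ} (h : IsSTuple n (m + 1) B)
    (h0 : 1 ∉ B 0) : ∃ t, B 1 = 1 :: t := by
  have hpos : 0 < (B 1).headI := h.headI_zero ▸ h.2.2.1 0 1 Fin.zero_lt_one
  have hn : 1 ≤ n := hpos.trans_le (h.exists_mem_iff.1 ⟨1, h.headI_mem 1⟩)
  obtain ⟨i, hi⟩ := h.exists_mem_iff.2 hn
  have hi1 : 1 ≤ i := Fin.one_le_of_ne_zero fun hi0 => h0 (hi0 ▸ hi)
  have hle : (B 1).headI ≤ 1 := (h.headI_strictMono.monotone hi1).trans (h.headI_le hi)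
  obtain ⟨a, t, hB⟩ := List.exists_cons_of_ne_nil (h.1 1)
  rw [hB] at hpos hle ⊢
  exact ⟨t, congrArg (· :: t) (le_antisymm hle hpos)⟩

lemma _root_.IsSTuple.one_notMem_update_removeNth_zero {B : Fin (m + 2) → List ℕ}
    (h : IsSTuple n (m + 1) B) (h0 : 1 ∉ B 0) {i : Fin (m + 1)} {j : Fin (m + 2)}
    (hij : i.castSucc < j) (hj : j ≠ 1) {S : Finset ℕ}
    (hS : S ⊆ Finset.Icc 1 ((B j).length - 1)) :
    1 ∉ Function.update (j.removeNth B) i (starOp (B i.castSucc) (B j) S) 0 := by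
  have h1 : 1 ∈ B 1 := by obtain ⟨t, ht⟩ := h.exists_eq_one_cons h0; simp [ht]
  obtain rfl | hi := eq_or_ne i 0
  · rw [Function.update_self, (starOp_perm _ (h.1 j) hS).mem_iff, List.mem_append]
    exact fun hmem => hmem.elim h0 fun hmem => hj (h.eq_of_mem_of_mem hmem h1)
  · rw [Function.update_of_ne hi.symm, Fin.removeNth_apply,
      Fin.succAbove_ne_zero_zero (Fin.ne_zero_of_lt hij)]
    exact h0

lemma isSTuple_mergeFirstBlocks {B : Fin (m + 2) → List ℕ} (h : IsSTuple n (m + 1) B) :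
    IsSTuple n m (mergeFirstBlocks B) := by
  rw [mergeFirstBlocks_eq_update, ← starOp_empty _ (h.1 1)]
  exact h.update_removeNth (i := 0) Fin.zero_lt_one (Finset.empty_subset _)

lemma _root_.IsSTuple.exists_eq_zero_cons_append {B : Fin (m + 1) → List ℕ} (h : IsSTuple n m B)
    (h1 : 1 ∈ B 0) :
    ∃ u v, B 0 = (0 :: u) ++ 1 :: v ∧ 1 ∉ u ∧ (∀ x ∈ u, 0 < x) ∧ ∀ x ∈ v, 1 < x := by
  obtain ⟨w, v, hB, hw⟩ := List.eq_append_cons_of_mem h1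
  have hhead := h.headI_zero
  have htail := h.2.2.2 0
  have hnodup := h.nodup 0
  rw [hB] at hhead htail hnodup
  obtain - | ⟨a, u⟩ := w
  · simp at hhead
  · obtain rfl : a = 0 := hhead
    refine ⟨u, v, hB, by grind, fun x hx => htail x (by simp [hx]), fun x hx => ?_⟩
    have hx0 : 0 < x := htail x (by simp [hx])
    have hx1 : x ≠ 1 := by grind
    lia

lemma _root_.IsSTuple.one_lt_headI_succ {B : Fin (m + 1) → List ℕ} (h : IsSTuple n m B)
    (h1 : 1 ∈ B 0) (i : Fin m) : 1 < (B i.succ).headI := by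
  have hpos : 0 < (B i.succ).headI := h.headI_zero ▸ h.2.2.1 0 i.succ i.succ_pos
  have hne : (B i.succ).headI ≠ 1 := fun hi =>
    i.succ_ne_zero (h.eq_of_mem_of_mem (hi ▸ h.headI_mem i.succ) h1)
  lia

lemma isSTuple_splitFirstBlock {B : Fin (m + 1) → List ℕ} (h : IsSTuple n m B) (h1 : 1 ∈ B 0) :
    IsSTuple n (m + 1) (splitFirstBlock B) := by
  obtain ⟨u, v, hB, hu, hu0, hv⟩ := h.exists_eq_zero_cons_append h1
  have hu' : 1 ∉ 0 :: u := by simpa using hu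
  have hsplit : splitFirstBlock B = Fin.cons (0 :: u) (Fin.cons (1 :: v) (Fin.tail B)) := by
    rw [splitFirstBlock, hB, onePrefix_append_one_cons hu' v,
      oneSuffix_append_one_cons hu' v]
  rw [hsplit]
  refine ⟨?_, ?_, ?_, ?_⟩
  · simpa [Fin.forall_fin_succ, Fin.tail] using fun i : Fin m => h.1 i.succ
  · refine .trans (.of_eq ?_) h.2.1
    simp [List.ofFn_succ, Fin.tail, hB]
  · have hhead := h.one_lt_headI_succ h1
    have hpos (i : Fin m) := (hhead i).pos
    have hlt (i j : Fin m) := h.2.2.1 i.succ j.succ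
    simp_all [Fin.forall_fin_succ, Fin.tail]
  · simpa [Fin.forall_fin_succ, Fin.tail] using ⟨hu0, hv, fun i : Fin m => h.2.2.2 i.succ⟩

end Position

/-! ### The contraction -/

section Contraction

variable {n m : ℕ}

/-- The split tuple `(0u | 1v | …)` obtained from the split tuple `(0u1v | …)`. -/
def _root_.STuple.splitFirst (b : STuple n m) (h : 1 ∈ b.B 0) : STuple n (m + 1) :=
  ⟨splitFirstBlock b.B, isSTuple_splitFirstBlock b.prop h⟩

/-- The split tuple obtained by concatenating the first two blocks. -/
def _root_.STuple.mergeFirst (b : STuple n (m + 1)) : STuple n m :=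
  ⟨mergeFirstBlocks b.B, isSTuple_mergeFirstBlocks b.prop⟩

lemma _root_.STuple.mergeFirst_splitFirst (b : STuple n m) (h : 1 ∈ b.B 0) :
    (b.splitFirst h).mergeFirst = b :=
  STuple.ext (mergeFirstBlocks_splitFirstBlock b.B)

lemma _root_.STuple.exists_splitFirst_mergeFirst (b : STuple n (m + 1)) (h0 : 1 ∉ b.B 0) :
    ∃ h : 1 ∈ b.mergeFirst.B 0, b.mergeFirst.splitFirst h = b := by
  obtain ⟨t, ht⟩ := b.prop.exists_eq_one_cons h0
  have h1 : 1 ∈ b.B 1 := by simp [ht]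
  exact ⟨List.mem_append_right _ h1, STuple.ext (splitFirstBlock_mergeFirstBlocks h0 ht)⟩

variable (k : Type*) [CommRing k]

-- A term with `j ≠ 1` has no `1` in its first block. For `j = 1` the summand `S = ∅` is the merged
-- tuple, and a nonempty `S` moves entries of `B₁ = 1v` in front of `1`.
theorem Dmap_single_add_single_mergeFirst_mem (b : STuple n (m + 1)) (h0 : 1 ∉ b.B 0) :
    Dmap k n m (single b 1) + single b.mergeFirst 1 ∈
      supported k k {c : STuple n m | (oneSuffix (c.B 0)).length < (b.B 1).length} := by
  obtain ⟨t, ht⟩ := b.prop.exists_eq_one_cons h0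
  have ht1 : 1 ∉ t := (List.nodup_cons.1 (ht ▸ b.prop.nodup 1)).1
  set P := supported k k {c : STuple n m | (oneSuffix (c.B 0)).length < (b.B 1).length}
  have hmem {A : Fin (m + 1) → List ℕ} (hA : IsSTuple n m A)
      (hlt : (oneSuffix (A 0)).length < (b.B 1).length) : toBasisK k n m A ∈ P := by
    rw [toBasisK_of_isSTuple k hA]
    exact single_mem_supported k 1 hlt
  have hmerge : single b.mergeFirst 1 = toBasisK k n m (mergeFirstBlocks b.B) :=
    (toBasisK_of_isSTuple k (isSTuple_mergeFirstBlocks b.prop)).symm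
  rw [Dmap_single, hmerge]
  refine leibnizSum_add_mergeFirstBlocks_mem (P := P.toAddSubgroup) (b.prop.1 1)
    (fun S hS hne => hmem (b.prop.update_removeNth (i := 0) Fin.zero_lt_one hS) ?_)
    (fun i j hij hj S hS => hmem (b.prop.update_removeNth hij hS) ?_)
  · rw [ht] at hS ⊢
    rw [Function.update_self]
    exact length_oneSuffix_starOp_lt h0 ht1 hS hne
  · rw [oneSuffix_eq_nil.2 (b.prop.one_notMem_update_removeNth_zero h0 hij hj hS), ht]
    simp

/-- The contraction `(0u1v | …) ↦ -(0u | 1v | …)` of `K(n)`, which vanishes on the split tuples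
whose first block does not contain `1`. -/
noncomputable def contraction (n m : ℕ) : Kmod k n m →ₗ[k] Kmod k n (m + 1) :=
  linearCombination k fun b => if h : 1 ∈ b.B 0 then -single (b.splitFirst h) 1 else 0

variable {k}

lemma contraction_single_of_mem (b : STuple n m) (h : 1 ∈ b.B 0) :
    contraction k n m (single b 1) = -single (b.splitFirst h) 1 := by
  simp [contraction, h]

lemma contraction_single_of_notMem (b : STuple n m) (h : 1 ∉ b.B 0) :
    contraction k n m (single b 1) = 0 := by
  simp [contraction, h]

lemma contraction_mem_supported {s : Set (STuple n m)} {z : Kmod k n m}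
    (hz : z ∈ supported k k s) :
    contraction k n m z ∈
      supported k k {c | 1 ∉ c.B 0 ∧ ∃ b ∈ s, c.B 1 = oneSuffix (b.B 0)} := by
  suffices h : supported k k s ≤ (supported k k _).comap (contraction k n m) from h hz
  refine supported_le_iff.2 fun b hb => Submodule.mem_comap.2 ?_
  by_cases h : 1 ∈ b.B 0
  · rw [contraction_single_of_mem b h]
    exact neg_mem (single_mem_supported k 1 ⟨one_notMem_onePrefix _, b, hb, rfl⟩)
  · rw [contraction_single_of_notMem b h]
    exact zero_mem _

/-- The lexicographic weight `(|1v|, |B₁|)` of `(0u1v | B₁ | …)`, where `|1v| = 0` if `1` does not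
occur in the first block. -/
def weight (b : STuple n (m + 1)) : ℕ ×ₗ ℕ :=
  toLex ((oneSuffix (b.B 0)).length, (b.B 1).length)

variable (k) in
/-- The failure of `contraction` to be a contracting homotopy, in degree `m + 1`. -/
noncomputable def defect (n m : ℕ) : Module.End k (Kmod k n (m + 1)) :=
  1 - contraction k n m ∘ₗ Dmap k n m - Dmap k n (m + 1) ∘ₗ contraction k n (m + 1)

lemma defect_single_mem_of_notMem (b : STuple n (m + 1)) (h0 : 1 ∉ b.B 0) :
    defect k n m (single b 1) ∈ supported k k {c | weight c < weight b} := by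
  obtain ⟨hmerge, hsplit⟩ := b.exists_splitFirst_mergeFirst h0
  have hb := contraction_single_of_mem (k := k) b.mergeFirst hmerge
  have hdefect : defect k n m (single b 1) =
      -contraction k n m (Dmap k n m (single b 1) + single b.mergeFirst 1) := by
    simp only [defect, LinearMap.sub_apply, Module.End.one_apply, LinearMap.comp_apply, map_add,
      contraction_single_of_notMem b h0, map_zero, hb, hsplit]
    abel
  rw [hdefect]
  refine neg_mem (supported_mono ?_
    (contraction_mem_supported (Dmap_single_add_single_mergeFirst_mem k b h0)))
  rintro c ⟨hc, a, ha, hca⟩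
  simpa [weight, Prod.Lex.toLex_lt_toLex, oneSuffix_eq_nil.2 hc, oneSuffix_eq_nil.2 h0, hca]
    using ha

lemma defect_single_mem_of_mem (b : STuple n (m + 1)) (h1 : 1 ∈ b.B 0) :
    defect k n m (single b 1) ∈ supported k k {c | weight c < weight b} := by
  have hmerge := Dmap_single_add_single_mergeFirst_mem k (b.splitFirst h1) (one_notMem_onePrefix _)
  rw [b.mergeFirst_splitFirst h1] at hmerge
  have hdefect : defect k n m (single b 1) =
      (Dmap k n (m + 1) (single (b.splitFirst h1) 1) + single b 1) -
        contraction k n m (Dmap k n m (single b 1)) := by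
    simp only [defect, LinearMap.sub_apply, Module.End.one_apply, LinearMap.comp_apply,
      contraction_single_of_mem b h1, map_neg]
    abel
  rw [hdefect]
  refine sub_mem (supported_mono ?_ hmerge) (supported_mono ?_
    (contraction_mem_supported (s := Set.univ) (by simp)))
  · exact fun c hc => Prod.Lex.toLex_lt_toLex.2 (.inl hc)
  · rintro c ⟨hc, -⟩
    refine Prod.Lex.toLex_lt_toLex.2 (.inl ?_)
    rw [oneSuffix_eq_nil.2 hc]
    exact List.length_pos_iff.2 fun h => oneSuffix_eq_nil.1 h h1

theorem defect_single_mem_supported_weight_lt (b : STuple n (m + 1)) :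
    defect k n m (single b 1) ∈ supported k k {c | weight c < weight b} :=
  (em (1 ∈ b.B 0)).elim (defect_single_mem_of_mem b) (defect_single_mem_of_notMem b)

end Contraction

end LeibnizComplex

/-- Proposition 4.1 of Hoffbeck–Vespa (vanishing of the Leibniz homology of the
projective generators): the homology of the chain complex `(K(n)_*, D)` vanishes in
every positive degree, i.e. for every `m`, the kernel of `D : K(n)_{m+1} → K(n)_m`
equals the image of `D : K(n)_{m+2} → K(n)_{m+1}`. -/
theorem K_homology_vanishes (k : Type*) [CommRing k] (n : ℕ) :
    ∀ m : ℕ, LinearMap.ker (Dmap k n m) = LinearMap.range (Dmap k n (m + 1)) := by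
  open LeibnizComplex in
  exact fun m => ker_eq_range_of_locally_nilpotent_defect (contraction k n m)
    (contraction k n (m + 1)) (Dmap_comp_Dmap k)
    (exists_pow_apply_eq_zero_of_supported_lt weight (defect k n m)
      defect_single_mem_supported_weight_lt)
end

section
/- Let k be a nontrivial commutative ring and n ≥ 1. In the free Lie algebra over k on the set {0,1,…,n-1}, the family of (n-1)! elements leftComb(ι(0), ι(σ(1)), …, ι(σ(n-1))) = [[…[[ι(0), ι(σ(1))], ι(σ(2))],…], ι(σ(n-1))], indexed by the permutations σ of {1,…,n-1}, is linearly independent over k. -/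
/-- The left-comb iterated bracket: `leftComb a [b₁,…,bₚ] = [[…[[a,b₁],b₂],…],bₚ]`. -/
def leftComb {L : Type*} [LieRing L] (a : L) (l : List L) : L :=
  l.foldl (fun x y => ⁅x, y⁆) a

/-!
Let `x₀` be a generator and `T` the free associative algebra on the generators. In `2 × 2` matrices
over `T`, indexed by `{0, 1}`, we have `⁅a E₀₁, b E₁₁⁆ = (a b) E₀₁`, because `E₁₁ E₀₁ = 0`. Hence
the Lie algebra homomorphism sending `x₀` to `E₀₁` and every other generator `x` to `x E₁₁` turns
the left comb of `x₀` with `x₁, …, xₚ` into `(x₁ ⋯ xₚ) E₀₁`, as long as no `xᵢ` is `x₀`.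
Distinct words are linearly independent in `T`, so the left combs are independent too.
-/

theorem linearIndependent_prod_map_freeAlgebra_ι (R X : Type*) [CommSemiring R] :
    LinearIndependent R fun w : List X => (w.map (FreeAlgebra.ι R)).prod := by
  have monomial_eq (w : List X) :
      FreeAlgebra.basisFreeMonoid R X (FreeMonoid.ofList w) = (w.map (FreeAlgebra.ι R)).prod := by
    simp [FreeAlgebra.basisFreeMonoid, FreeAlgebra.equivMonoidAlgebraFreeMonoid]
  simpa only [Function.comp_def, monomial_eq] using
    (FreeAlgebra.basisFreeMonoid R X).linearIndependent.comp _ FreeMonoid.ofList.injective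

theorem map_leftComb {R L L' : Type*} [CommRing R] [LieRing L] [LieAlgebra R L] [LieRing L']
    [LieAlgebra R L'] (f : L →ₗ⁅R⁆ L') (a : L) (l : List L) :
    f (leftComb a l) = leftComb (f a) (l.map f) := by
  rw [leftComb, leftComb, List.foldl_map]
  exact (List.foldl_hom f fun x y => (f.map_lie x y).symm).symm

section Commutator

attribute [local instance 100] LieRing.ofAssociativeRing

section Single

variable {n A : Type*} [Fintype n] [DecidableEq n] [Ring A] {i j : n}

theorem lie_single_single_of_ne (hij : i ≠ j) (a b : A) :
    ⁅Matrix.single i j a, Matrix.single j j b⁆ = Matrix.single i j (a * b) := by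
  rw [Ring.lie_def, Matrix.single_mul_single_same, Matrix.single_mul_single_of_ne _ _ _ _ hij.symm,
    sub_zero]

theorem leftComb_single_map_single (hij : i ≠ j) (a : A) (l : List A) :
    leftComb (Matrix.single i j a) (l.map (Matrix.single j j)) =
      Matrix.single i j (a * l.prod) := by
  induction l generalizing a with
  | nil => rw [List.prod_nil, mul_one]; rfl
  | cons b l ih =>
    calc leftComb (Matrix.single i j a) ((b :: l).map (Matrix.single j j))
      _ = leftComb ⁅Matrix.single i j a, Matrix.single j j b⁆ (l.map (Matrix.single j j)) := rfl
      _ = Matrix.single i j (a * (b :: l).prod) := by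
        rw [lie_single_single_of_ne hij, ih, mul_assoc, List.prod_cons]

end Single

section CombRep

variable (k : Type*) {X : Type*} [CommRing k] [DecidableEq X] (x₀ : X)

/-- The matrix representation of the free Lie algebra that detects left combs starting at `x₀`:
it sends `x₀` to `E₀₁` and every other generator `x` to `x E₁₁`, with entries in the free
associative algebra. -/
noncomputable def combRep :
    FreeLieAlgebra k X →ₗ⁅k⁆ Matrix (Fin 2) (Fin 2) (FreeAlgebra k X) :=
  FreeLieAlgebra.lift k <|
    Function.update (fun x => Matrix.single 1 1 (FreeAlgebra.ι k x)) x₀ (Matrix.single 0 1 1)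

theorem combRep_of_self : combRep k x₀ (FreeLieAlgebra.of k x₀) = Matrix.single 0 1 1 := by
  rw [combRep, FreeLieAlgebra.lift_of_apply, Function.update_self]

variable {x₀}

theorem combRep_of_ne {x : X} (hx : x ≠ x₀) :
    combRep k x₀ (FreeLieAlgebra.of k x) = Matrix.single 1 1 (FreeAlgebra.ι k x) := by
  rw [combRep, FreeLieAlgebra.lift_of_apply, Function.update_of_ne hx]

theorem combRep_leftComb {w : List X} (hw : x₀ ∉ w) :
    combRep k x₀ (leftComb (FreeLieAlgebra.of k x₀) (w.map (FreeLieAlgebra.of k))) =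
      Matrix.single 0 1 (w.map (FreeAlgebra.ι k)).prod := by
  have map_letters : (w.map (FreeLieAlgebra.of k)).map (combRep k x₀) =
      (w.map (FreeAlgebra.ι k)).map (Matrix.single 1 1) := by
    rw [List.map_map, List.map_map]
    exact List.map_congr_left fun x hx => combRep_of_ne k (ne_of_mem_of_not_mem hx hw)
  rw [map_leftComb, combRep_of_self, map_letters, leftComb_single_map_single zero_ne_one, one_mul]

end CombRep

theorem leftComb_linearIndependent_general (k : Type*) {X : Type*} [CommRing k] (x₀ : X) :
    LinearIndependent k fun w : {w : List X // x₀ ∉ w} =>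
      leftComb (FreeLieAlgebra.of k x₀) (w.1.map (FreeLieAlgebra.of k)) := by
  classical
  let upperRight : FreeLieAlgebra k X →ₗ[k] FreeAlgebra k X :=
    Matrix.entryLinearMap k (FreeAlgebra k X) 0 1 ∘ₗ (combRep k x₀).toLinearMap
  have upperRight_leftComb (w : {w : List X // x₀ ∉ w}) :
      upperRight (leftComb (FreeLieAlgebra.of k x₀) (w.1.map (FreeLieAlgebra.of k))) =
        (w.1.map (FreeAlgebra.ι k)).prod := by
    change combRep k x₀ _ 0 1 = _
    rw [combRep_leftComb k w.2, Matrix.single_apply_same]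
  refine .of_comp upperRight ?_
  simpa only [Function.comp_def, upperRight_leftComb] using
    (linearIndependent_prod_map_freeAlgebra_ι k X).comp _ Subtype.val_injective

end Commutator

/-- The word `(σ 0 + 1) ⋯ (σ (m - 1) + 1)` of a permutation `σ` of `{0, …, m - 1}`. The shift by one
makes `σ` a permutation of the nonzero elements of `Fin (m + 1)`. -/
def permWord {m : ℕ} (σ : Equiv.Perm (Fin m)) : {w : List (Fin (m + 1)) // 0 ∉ w} :=
  ⟨List.ofFn fun i => (σ i).succ, by simp [List.mem_ofFn]⟩

theorem permWord_injective (m : ℕ) :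
    Function.Injective (permWord : Equiv.Perm (Fin m) → {w : List (Fin (m + 1)) // 0 ∉ w}) :=
  fun _ _ h => Equiv.ext fun i =>
    Fin.succ_injective m (congrFun (List.ofFn_injective (congrArg Subtype.val h)) i)

/-- For a nontrivial commutative ring `k` and `n = m + 1 ≥ 1`, in the free Lie algebra
over `k` on the set `{0,1,…,n-1} = Fin (m+1)`, the `(n-1)!` left-comb elements
`[[…[[ι(0), ι(σ(1))], ι(σ(2))],…], ι(σ(n-1))]`, indexed by the permutations `σ` of
`{1,…,n-1}`, are linearly independent over `k`. -/
theorem leftComb_linearIndependent (k : Type*) [CommRing k] [Nontrivial k] (m : ℕ) :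
    LinearIndependent k (fun σ : Equiv.Perm (Fin m) =>
      leftComb (FreeLieAlgebra.of k (0 : Fin (m + 1)))
        (List.ofFn fun i : Fin m => FreeLieAlgebra.of k ((σ i).succ))) := by
  simpa only [permWord, Function.comp_def, List.map_ofFn] using
    (leftComb_linearIndependent_general k (0 : Fin (m + 1))).comp _ (permWord_injective m)
end
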